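/- arXiv:1502.04460 — 2 statements merged into one kernel-verified Lean document; each statement's English description precedes it below -/
import Mathlib

section
/- Let k be a field of characteristic not 2 and let q1, q2 be quadratic forms in 5 variables over k such that the projective variety X ⊂ P^4_k defined by q1 = q2 = 0 is a smooth surface of dimension 2. Then the binary form f(λ,μ) = det(λ·M1 + μ·M2), where M1 and M2 are the Gram matrices of q1 and q2, is a nonzero homogeneous polynomial of degree 5 that is separable (i.e., has 5 distinct roots in P^1 over an algebraic closure of k). -/
open Matrix MvPolynomial

/-- The binary form `f(λ,μ) = det (λ·M₁ + μ·M₂)` attached to a pencil of quadrics,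
as a polynomial in the two variables `X 0 = λ` and `X 1 = μ`. -/
noncomputable def pencilDet {k : Type*} [Field k] {m : Type*} [Fintype m] [DecidableEq m]
    (M1 M2 : Matrix m m k) : MvPolynomial (Fin 2) k :=
  Matrix.det (Matrix.of fun i j => X 0 * C (M1 i j) + X 1 * C (M2 i j))

/-!
If a member `N` of the pencil is singular with kernel vector `v ≠ 0`, then every other member
`M` satisfies `vᵀ M v ≠ 0`: otherwise `v` would lie on both quadrics and their gradients there
would be dependent. Over an algebraically closed field this forces `ker N` to be the line through
`v`, since every quadratic form has an isotropic vector on every plane.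

For `P(t) = N + t M` the relation `vᵀ P(t) = t (vᵀ M)` gives `vᵢ det P(t) = t det Q(t)`, where
`Q(t)` is `P(t)` with row `i` replaced by `vᵀ M`. If `vᵢ ≠ 0`, then `Q(0)` is invertible, because
a vector killed by `Q(0)` is a multiple of `v` that is orthogonal to `v` for `M`. Hence `det P` has
only a simple zero at `t = 0`. So `det` is a separable polynomial along every affine line in the
parameter plane of the pencil that misses the origin. In particular the pencil has a nonsingular
member, and the affine chart of the projective line omitting that member contains all the roots.
-/

open scoped LinearAlgebra.Projectivization Polynomial

section ProjectiveLine

variable {K V : Type*} [Field K] [AddCommGroup V] [Module K V] {u w : V}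

theorem smul_add_ne_zero (huw : LinearIndependent K ![u, w]) (t : K) : t • u + w ≠ 0 := fun h =>
  one_ne_zero (LinearIndependent.pair_iff.1 huw t 1 (by rwa [one_smul])).2

theorem linearIndependent_smul_add_pair (huw : LinearIndependent K ![u, w]) (t : K) :
    LinearIndependent K ![t • u + w, u] := by
  rwa [LinearIndependent.pair_symm_iff, LinearIndependent.pair_add_smul_right_iff]

theorem exists_smul_add_smul_eq (hV : Module.finrank K V = 2)
    (huw : LinearIndependent K ![u, w]) (e : V) : ∃ a b : K, a • u + b • w = e := by
  have : FiniteDimensional K V := Module.finite_of_finrank_eq_succ hV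
  have hspan := huw.span_eq_top_of_card_eq_finrank' (by rw [hV, Fintype.card_fin])
  rw [range_cons_cons_empty] at hspan
  exact Submodule.mem_span_pair.1 (hspan ▸ Submodule.mem_top)

/-- The affine chart `t ↦ [t • u + w]` of the projective line through `[u]` and `[w]`; it omits
the point `[u]`, which lies at `t = ∞`. -/
def affineChart (huw : LinearIndependent K ![u, w]) (t : K) : ℙ K V :=
  Projectivization.mk K (t • u + w) (smul_add_ne_zero huw t)

theorem affineChart_injective (huw : LinearIndependent K ![u, w]) :
    Function.Injective (affineChart huw) := by
  intro t t' h
  obtain ⟨r, hr⟩ := (Projectivization.mk_eq_mk_iff' ..).1 h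
  obtain ⟨hu, hw⟩ := huw.eq_of_pair (s := r * t') (t := r) (s' := t) (t' := 1) <| by
    rw [mul_smul, ← smul_add, hr, one_smul]
  rw [← hu, hw, one_mul]

theorem exists_affineChart_eq (hV : Module.finrank K V = 2) (huw : LinearIndependent K ![u, w])
    {P : ℙ K V} (hP : P ≠ Projectivization.mk K u (huw.ne_zero 0)) :
    ∃ t, affineChart huw t = P := by
  induction P with | h e he
  obtain ⟨a, b, rfl⟩ := exists_smul_add_smul_eq hV huw e
  have hb : b ≠ 0 := by
    rintro rfl
    exact hP ((Projectivization.mk_eq_mk_iff' ..).2 ⟨a, by rw [zero_smul, add_zero]⟩)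
  refine ⟨b⁻¹ * a, (Projectivization.mk_eq_mk_iff' ..).2 ⟨b⁻¹, ?_⟩⟩
  rw [smul_add, smul_smul, smul_smul, inv_mul_cancel₀ hb, one_smul]

end ProjectiveLine

section AnisotropicForm

variable {K V : Type*} [Field K] [IsAlgClosed K] [AddCommGroup V] [Module K V]

theorem exists_quadraticForm_add_smul_eq_zero (Q : QuadraticForm K V) {v : V} (hv : Q v ≠ 0)
    (x : V) : ∃ s : K, Q (x + s • v) = 0 := by
  obtain ⟨s, hs⟩ := IsAlgClosed.exists_root (Polynomial.C (Q v) * Polynomial.X ^ 2 +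
      Polynomial.C (QuadraticMap.polar Q x v) * Polynomial.X + Polynomial.C (Q x))
    (by rw [Polynomial.degree_quadratic hv]; exact two_ne_zero)
  refine ⟨s, ?_⟩
  simp only [Polynomial.IsRoot, Polynomial.eval_add, Polynomial.eval_mul, Polynomial.eval_C,
    Polynomial.eval_pow, Polynomial.eval_X] at hs
  rw [QuadraticMap.map_add Q, QuadraticMap.map_smul, QuadraticMap.polar_smul_right, smul_eq_mul,
    smul_eq_mul]
  linear_combination hs

theorem exists_eq_smul_of_anisotropic {Q : QuadraticForm K V} {W : Submodule K V}
    (hQ : ∀ x ∈ W, Q x = 0 → x = 0) {v x : V} (hv : v ∈ W) (hv0 : v ≠ 0) (hx : x ∈ W) :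
    ∃ s : K, x = s • v := by
  obtain ⟨s, hs⟩ := exists_quadraticForm_add_smul_eq_zero Q (mt (hQ v hv) hv0) x
  have hsum : x + s • v = 0 := hQ _ (W.add_mem hx (W.smul_mem s hv)) hs
  exact ⟨-s, by rw [neg_smul]; exact eq_neg_of_add_eq_zero_left hsum⟩

end AnisotropicForm

section PencilPolynomial

variable {R K n : Type*} [CommRing R] [Field K]

theorem map_eval_X_smul_add (A B : Matrix n n R) (t : R) :
    ((Polynomial.X : R[X]) • A.map Polynomial.C + B.map Polynomial.C).map
      (Polynomial.evalRingHom t) = t • A + B := by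
  ext i j
  simp [mul_comm t]

variable [Fintype n]

theorem vecMul_X_smul_add {A B : Matrix n n R} {t : R} {v : n → R} (hv : v ᵥ* (t • A + B) = 0) :
    (Polynomial.C ∘ v) ᵥ* ((Polynomial.X : R[X]) • A.map Polynomial.C + B.map Polynomial.C) =
      (Polynomial.X - Polynomial.C t) • (Polynomial.C ∘ (v ᵥ* A)) := by
  have hB : v ᵥ* B = -(t • v ᵥ* A) := by
    rw [vecMul_add, vecMul_smul] at hv
    exact eq_neg_of_add_eq_zero_right hv
  have hC (M : Matrix n n R) :
      (Polynomial.C ∘ v) ᵥ* M.map Polynomial.C = Polynomial.C ∘ (v ᵥ* M) :=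
    funext fun j => (RingHom.map_vecMul Polynomial.C M v j).symm
  rw [vecMul_add, vecMul_smul, hC, hC, hB]
  ext1 j
  simp only [Pi.add_apply, Pi.smul_apply, Pi.neg_apply, Function.comp_apply, smul_eq_mul, map_neg,
    map_mul]
  ring

variable [DecidableEq n]

theorem det_updateRow_vecMul (P : Matrix n n R) (v : n → R) (i : n) :
    (P.updateRow i (v ᵥ* P)).det = v i * P.det := by
  rw [vecMul_eq_sum, det_updateRow_sum, smul_eq_mul]

/-- The polynomial `det (X • A + B)`, whose value at `t` is `det (t • A + B)`: the restriction of
the determinant to an affine line of matrices. -/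
noncomputable def pencilPolynomial (A B : Matrix n n R) : R[X] :=
  det ((Polynomial.X : R[X]) • A.map Polynomial.C + B.map Polynomial.C)

theorem eval_pencilPolynomial (A B : Matrix n n R) (t : R) :
    (pencilPolynomial A B).eval t = (t • A + B).det := by
  rw [pencilPolynomial, ← Polynomial.coe_evalRingHom, RingHom.map_det, RingHom.mapMatrix_apply,
    map_eval_X_smul_add]

theorem natDegree_pencilPolynomial {A : Matrix n n R} (hA : A.det ≠ 0) (B : Matrix n n R) :
    (pencilPolynomial A B).natDegree = Fintype.card n :=
  (Polynomial.natDegree_det_X_add_C_le A B).antisymm <|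
    Polynomial.le_natDegree_of_ne_zero <| by rwa [Polynomial.coeff_det_X_add_C_card]

theorem mul_eval_derivative_pencilPolynomial {A B : Matrix n n R} {t : R} {v : n → R}
    (hv : v ᵥ* (t • A + B) = 0) (i : n) :
    v i * (Polynomial.derivative (pencilPolynomial A B)).eval t =
      ((t • A + B).updateRow i (v ᵥ* A)).det := by
  set P := (Polynomial.X : R[X]) • A.map Polynomial.C + B.map Polynomial.C
  set g := (P.updateRow i (Polynomial.C ∘ (v ᵥ* A))).det
  have hfactor : (Polynomial.X - Polynomial.C t) * g =
      Polynomial.C (v i) * pencilPolynomial A B := by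
    rw [← det_updateRow_smul, ← vecMul_X_smul_add hv, det_updateRow_vecMul]
    rfl
  have hg : g.eval t = ((t • A + B).updateRow i (v ᵥ* A)).det := by
    rw [← Polynomial.coe_evalRingHom, RingHom.map_det, RingHom.mapMatrix_apply, map_updateRow,
      map_eval_X_smul_add]
    congr 2
    ext j
    simp
  have hderiv := congrArg (fun p => (Polynomial.derivative p).eval t) hfactor
  simpa [Polynomial.derivative_mul, hg] using hderiv.symm

theorem mulVec_eq_zero_of_updateRow_mulVec_eq_zero [IsDomain R] {N : Matrix n n R}
    {v r x : n → R} (hvN : v ᵥ* N = 0) {i : n} (hi : v i ≠ 0)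
    (hx : N.updateRow i r *ᵥ x = 0) : N *ᵥ x = 0 := by
  have hoff (j : n) (hj : j ≠ i) : (N *ᵥ x) j = 0 := by
    simpa [mulVec, hj] using congrFun hx j
  have hsum : v ⬝ᵥ N *ᵥ x = 0 := by rw [dotProduct_mulVec, hvN, zero_dotProduct]
  have hvi : v i * (N *ᵥ x) i = 0 := by
    rwa [dotProduct, Finset.sum_eq_single i (fun j _ hj => by rw [hoff j hj, mul_zero])
      (absurd (Finset.mem_univ i))] at hsum
  ext j
  by_cases hj : j = i
  · exact hj ▸ (mul_eq_zero.1 hvi).resolve_left hi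
  · exact hoff j hj

theorem det_updateRow_ne_zero_of_anisotropic [IsAlgClosed K] {M N : Matrix n n K} {v : n → K}
    (hM : ∀ x, x ≠ 0 → N *ᵥ x = 0 → x ⬝ᵥ M *ᵥ x ≠ 0) (hNv : N *ᵥ v = 0) (hvN : v ᵥ* N = 0)
    {i : n} (hi : v i ≠ 0) : (N.updateRow i (v ᵥ* M)).det ≠ 0 := by
  intro hdet
  obtain ⟨x, hx0, hx⟩ := exists_mulVec_eq_zero_iff.2 hdet
  have hv0 : v ≠ 0 := fun h => hi (congrFun h i)
  have hNx : N *ᵥ x = 0 := mulVec_eq_zero_of_updateRow_mulVec_eq_zero hvN hi hx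
  have hvx : v ⬝ᵥ M *ᵥ x = 0 := by
    simpa [mulVec, dotProduct_mulVec] using congrFun hx i
  obtain ⟨s, rfl⟩ : ∃ s : K, x = s • v :=
    exists_eq_smul_of_anisotropic (Q := M.toQuadraticForm') (W := LinearMap.ker N.mulVecLin)
      (fun y hNy hy => by_contra fun hy0 => hM y hy0 (by simpa using hNy)
        (by simpa [toQuadraticForm', toLinearMap₂'_apply'] using hy))
      (by simpa using hNv) hv0 (by simpa using hNx)
  rw [mulVec_smul, dotProduct_smul, smul_eq_mul, mul_eq_zero] at hvx
  exact hvx.elim (left_ne_zero_of_smul hx0) (hM v hv0 hNv)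

theorem separable_pencilPolynomial [IsAlgClosed K] {A B : Matrix n n K} (hA : A.IsSymm)
    (hB : B.IsSymm)
    (haniso : ∀ (t : K) (v : n → K), v ≠ 0 → (t • A + B) *ᵥ v = 0 → v ⬝ᵥ A *ᵥ v ≠ 0) :
    (pencilPolynomial A B).Separable := by
  refine (Polynomial.isCoprime_iff_aeval_ne_zero_of_isAlgClosed K K _ _).2 fun t => ?_
  rw [Polynomial.coe_aeval_eq_eval, or_iff_not_imp_left, not_not, eval_pencilPolynomial]
  intro hdet
  obtain ⟨v, hv0, hNv⟩ := exists_mulVec_eq_zero_iff.2 hdet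
  obtain ⟨i, hi⟩ := Function.ne_iff.1 hv0
  have hvN : v ᵥ* (t • A + B) = 0 := by
    rw [← mulVec_transpose, ((hA.smul t).add hB).eq, hNv]
  refine right_ne_zero_of_mul (a := v i) ?_
  rw [mul_eval_derivative_pencilPolynomial hvN]
  exact det_updateRow_ne_zero_of_anisotropic (haniso t) hNv hvN hi

end PencilPolynomial

section SingularMembers

variable {K V n : Type*} [Field K] [AddCommGroup V] [Module K V] [Fintype n] [DecidableEq n]

theorem det_rep_mk_eq_zero_iff (L : V →ₗ[K] Matrix n n K) {v : V} (hv : v ≠ 0) :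
    (L (Projectivization.mk K v hv).rep).det = 0 ↔ (L v).det = 0 := by
  obtain ⟨r, hr⟩ := Projectivization.exists_smul_eq_mk_rep K v hv
  rw [← hr, Units.smul_def, map_smul, det_smul, mul_eq_zero,
    or_iff_right (pow_ne_zero _ r.ne_zero)]

theorem setOf_det_rep_eq_zero (hV : Module.finrank K V = 2) (L : V →ₗ[K] Matrix n n K) {u w : V}
    (huw : LinearIndependent K ![u, w]) (hu : (L u).det ≠ 0) :
    {P : ℙ K V | (L P.rep).det = 0} =
      affineChart huw '' {t | (pencilPolynomial (L u) (L w)).IsRoot t} := by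
  have hmem (t : K) : (L (affineChart huw t).rep).det = 0 ↔
      (pencilPolynomial (L u) (L w)).IsRoot t := by
    rw [affineChart, det_rep_mk_eq_zero_iff, Polynomial.IsRoot, eval_pencilPolynomial, map_add,
      map_smul]
  ext P
  constructor
  · intro hP
    have hPu : P ≠ Projectivization.mk K u (huw.ne_zero 0) := by
      rintro rfl
      exact hu ((det_rep_mk_eq_zero_iff L _).1 hP)
    obtain ⟨t, rfl⟩ := exists_affineChart_eq hV huw hPu
    exact ⟨t, (hmem t).1 hP, rfl⟩
  · rintro ⟨t, ht, rfl⟩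
    exact (hmem t).2 ht

theorem ncard_setOf_det_rep_eq_zero [IsAlgClosed K] (hV : Module.finrank K V = 2)
    (L : V →ₗ[K] Matrix n n K) {u w : V} (huw : LinearIndependent K ![u, w])
    (hu : (L u).det ≠ 0) (hsep : (pencilPolynomial (L u) (L w)).Separable) :
    {P : ℙ K V | (L P.rep).det = 0}.ncard = Fintype.card n := by
  classical
  set p := pencilPolynomial (L u) (L w)
  have hroots : {t | p.IsRoot t} = p.roots.toFinset := by
    ext t
    simp [hsep.ne_zero]
  rw [setOf_det_rep_eq_zero hV L huw hu, Set.ncard_image_of_injective _ (affineChart_injective huw),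
    hroots, Set.ncard_coe_finset,
    Multiset.toFinset_card_of_nodup (Polynomial.nodup_roots hsep),
    IsAlgClosed.card_roots_eq_natDegree, natDegree_pencilPolynomial hu]

end SingularMembers

section SmoothPencil

variable {R K n : Type*} [CommRing R] [Field K]

/-- The pencil `(λ, μ) ↦ λ A + μ B` spanned by two matrices, with `λ = e 0` and `μ = e 1`. -/
def pencil (A B : Matrix n n R) : (Fin 2 → R) →ₗ[R] Matrix n n R :=
  Fintype.linearCombination R ![A, B]

theorem pencil_apply (A B : Matrix n n R) (e : Fin 2 → R) :
    pencil A B e = e 0 • A + e 1 • B := by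
  simp [pencil, Fintype.linearCombination_apply, Fin.sum_univ_two]

theorem isSymm_pencil {A B : Matrix n n R} (hA : A.IsSymm) (hB : B.IsSymm)
    (e : Fin 2 → R) : (pencil A B e).IsSymm := by
  rw [pencil_apply]
  exact (hA.smul _).add (hB.smul _)

variable [Fintype n]

/-- The Jacobian criterion for the quadrics `xᵀ A x = 0` and `xᵀ B x = 0` to meet in a smooth
subscheme of codimension two, tested at `K`-points. The gradients of the two forms are `2 A x` and
`2 B x` for symmetric `A` and `B`; the factor `2` is omitted, so in characteristic `2` this is a
condition on the Gram matrices and not on the quadrics alone. -/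
def IsSmoothIntersection (A B : Matrix n n K) : Prop :=
  ∀ x : n → K, x ≠ 0 → x ⬝ᵥ A *ᵥ x = 0 → x ⬝ᵥ B *ᵥ x = 0 → LinearIndependent K ![A *ᵥ x, B *ᵥ x]

theorem IsSmoothIntersection.dotProduct_pencil_mulVec_ne_zero {A B : Matrix n n K}
    (h : IsSmoothIntersection A B) {u w : Fin 2 → K} (huw : LinearIndependent K ![u, w])
    {v : n → K} (hv : v ≠ 0) (hwv : pencil A B w *ᵥ v = 0) : v ⬝ᵥ pencil A B u *ᵥ v ≠ 0 := by
  intro huv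
  have hzero (e : Fin 2 → K) : v ⬝ᵥ pencil A B e *ᵥ v = 0 := by
    obtain ⟨a, b, rfl⟩ := exists_smul_add_smul_eq (Module.finrank_fin_fun K) huw e
    rw [map_add, map_smul, map_smul, add_mulVec, smul_mulVec, smul_mulVec, hwv, smul_zero,
      add_zero, dotProduct_smul, huv, smul_zero]
  have hindep : LinearIndependent K ![A *ᵥ v, B *ᵥ v] :=
    h v hv (by simpa [pencil_apply] using hzero ![1, 0])
      (by simpa [pencil_apply] using hzero ![0, 1])
  rw [pencil_apply, add_mulVec, smul_mulVec, smul_mulVec] at hwv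
  obtain ⟨h0, h1⟩ := LinearIndependent.pair_iff.1 hindep _ _ hwv
  exact huw.ne_zero 1 (funext (Fin.forall_fin_two.2 ⟨h0, h1⟩))

variable [DecidableEq n] [IsAlgClosed K]

theorem IsSmoothIntersection.separable_pencilPolynomial {A B : Matrix n n K}
    (h : IsSmoothIntersection A B) (hA : A.IsSymm) (hB : B.IsSymm) {u w : Fin 2 → K}
    (huw : LinearIndependent K ![u, w]) :
    (pencilPolynomial (pencil A B u) (pencil A B w)).Separable := by
  refine _root_.separable_pencilPolynomial (isSymm_pencil hA hB u) (isSymm_pencil hA hB w)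
    fun t v hv hker => ?_
  rw [← map_smul, ← map_add] at hker
  exact h.dotProduct_pencil_mulVec_ne_zero
    (LinearIndependent.pair_symm_iff.1 (linearIndependent_smul_add_pair huw t)) hv hker

theorem IsSmoothIntersection.exists_det_pencil_ne_zero {A B : Matrix n n K}
    (h : IsSmoothIntersection A B) (hA : A.IsSymm) (hB : B.IsSymm) {u w : Fin 2 → K}
    (huw : LinearIndependent K ![u, w]) : ∃ t : K, (pencil A B (t • u + w)).det ≠ 0 := by
  by_contra! hdet
  refine (h.separable_pencilPolynomial hA hB huw).ne_zero (Polynomial.funext fun t => ?_)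
  rw [eval_pencilPolynomial, ← map_smul, ← map_add, hdet, Polynomial.eval_zero]

theorem IsSmoothIntersection.ncard_singular_pencil {A B : Matrix n n K}
    (h : IsSmoothIntersection A B) (hA : A.IsSymm) (hB : B.IsSymm) :
    {P : ℙ K (Fin 2 → K) | (pencil A B P.rep).det = 0}.ncard = Fintype.card n := by
  have hbasis : LinearIndependent K ![![(1 : K), 0], ![0, 1]] := by
    simp [LinearIndependent.pair_iff]
  obtain ⟨t, ht⟩ := h.exists_det_pencil_ne_zero hA hB hbasis
  have huw : LinearIndependent K ![t • ![1, 0] + ![0, 1], ![(1 : K), 0]] :=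
    linearIndependent_smul_add_pair hbasis t
  exact ncard_setOf_det_rep_eq_zero (Module.finrank_fin_fun K) _ huw ht
    (h.separable_pencilPolynomial hA hB huw)

end SmoothPencil

section PencilDet

variable {k R K n : Type*} [Field k] [CommRing R] [Field K] [Fintype n] [DecidableEq n]

theorem isHomogeneous_det {τ : Type*} {N : Matrix n n (MvPolynomial τ R)} {d : ℕ}
    (hN : ∀ i j, (N i j).IsHomogeneous d) : N.det.IsHomogeneous (Fintype.card n * d) := by
  rw [det_apply']
  refine IsHomogeneous.sum _ _ _ fun σ _ => ?_
  rw [← map_intCast (C (R := R) (σ := τ))]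
  refine IsHomogeneous.C_mul ?_ _
  simpa using IsHomogeneous.prod Finset.univ _ _ fun i _ => hN (σ i) i

theorem isHomogeneous_pencilDet (M1 M2 : Matrix n n k) :
    (pencilDet M1 M2).IsHomogeneous (Fintype.card n) := by
  rw [← mul_one (Fintype.card n)]
  refine isHomogeneous_det fun i j => ?_
  simp only [of_apply, mul_comm (X _)]
  exact (isHomogeneous_C_mul_X _ _).add (isHomogeneous_C_mul_X _ _)

theorem eval_map_pencilDet (φ : k →+* R) (M1 M2 : Matrix n n k) (e : Fin 2 → R) :
    eval e (map φ (pencilDet M1 M2)) = (pencil (M1.map φ) (M2.map φ) e).det := by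
  rw [pencilDet, RingHom.map_det, RingHom.map_det, pencil_apply]
  congr 1
  ext i j
  simp

theorem pencilDet_ne_zero_of_det_pencil_ne_zero {φ : k →+* R} {M1 M2 : Matrix n n k}
    {e : Fin 2 → R} (he : (pencil (M1.map φ) (M2.map φ) e).det ≠ 0) : pencilDet M1 M2 ≠ 0 := by
  intro h
  rw [← eval_map_pencilDet, h, map_zero, map_zero] at he
  exact he rfl

theorem stmt0_general [IsAlgClosed K] (φ : k →+* K) {M1 M2 : Matrix n n k} (hs1 : M1.IsSymm)
    (hs2 : M2.IsSymm) (hsmooth : IsSmoothIntersection (M1.map φ) (M2.map φ)) :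
    pencilDet M1 M2 ≠ 0 ∧ (pencilDet M1 M2).IsHomogeneous (Fintype.card n) ∧
      {P : ℙ K (Fin 2 → K) | eval P.rep (map φ (pencilDet M1 M2)) = 0}.ncard =
        Fintype.card n := by
  have hA := hs1.map φ
  have hB := hs2.map φ
  obtain ⟨t, ht⟩ := hsmooth.exists_det_pencil_ne_zero hA hB (u := ![1, 0]) (w := ![0, 1])
    (by simp [LinearIndependent.pair_iff])
  refine ⟨pencilDet_ne_zero_of_det_pencil_ne_zero ht, isHomogeneous_pencilDet M1 M2, ?_⟩
  simp only [eval_map_pencilDet]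
  exact hsmooth.ncard_singular_pencil hA hB

end PencilDet

/-- If the intersection `X = {q₁ = q₂ = 0} ⊂ P⁴` of two quadrics is smooth of dimension 2
(Jacobian criterion over an algebraic closure), then `f(λ,μ) = det (λ M₁ + μ M₂)` is a nonzero
homogeneous polynomial of degree 5 which is separable, i.e. has exactly 5 distinct roots
in `P¹` over the algebraic closure. -/
theorem stmt0 {k : Type*} [Field k] (h2 : (2 : k) ≠ 0)
    (M1 M2 : Matrix (Fin 5) (Fin 5) k) (hs1 : M1.IsSymm) (hs2 : M2.IsSymm)
    (hsmooth : ∀ x : Fin 5 → AlgebraicClosure k, x ≠ 0 →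
      x ⬝ᵥ (M1.map (algebraMap k (AlgebraicClosure k))).mulVec x = 0 →
      x ⬝ᵥ (M2.map (algebraMap k (AlgebraicClosure k))).mulVec x = 0 →
      LinearIndependent (AlgebraicClosure k)
        ![(M1.map (algebraMap k (AlgebraicClosure k))).mulVec x,
          (M2.map (algebraMap k (AlgebraicClosure k))).mulVec x]) :
    pencilDet M1 M2 ≠ 0 ∧ (pencilDet M1 M2).IsHomogeneous 5 ∧
      {t : Projectivization (AlgebraicClosure k) (Fin 2 → AlgebraicClosure k) |
        MvPolynomial.eval t.rep
          (MvPolynomial.map (algebraMap k (AlgebraicClosure k)) (pencilDet M1 M2)) = 0}.ncard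
        = 5 := by
  simpa only [Fintype.card_fin] using stmt0_general (algebraMap k _) hs1 hs2 hsmooth
end

section
/- Let X ⊂ P^n (n ≥ 4) be a smooth complete intersection of two quadrics over a field k of characteristic not 2, D ≅ P^1_k the pencil of quadrics containing X, and Z = {(q,h) ∈ D × (P^n)* : q ∩ h is singular} with its finite flat degree-n projection to (P^n)*. Then the monodromy group of this covering (the Galois group of the Galois closure of the function field extension k(Z)/k((P^n)*)) is isomorphic to the full symmetric group S_n. -/
/-! A smooth pencil of quadrics over an algebraically closed field is diagonal in a suitable basis,
and its diagonal entries `(a i, b i)` are pairwise distinct points of the projective line. In such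
a basis the dual form of the hyperplane `y` is `∑ i, y i ^ 2 * ∏ j ≠ i, (a j * T + b j)`. Lagrange
interpolation on the projective line writes every polynomial of degree at most `n` as
`∑ i, c i * ∏ j ≠ i, (a j * T + b j)`, where `c i` is up to a constant the value of the polynomial
at the root `-b i / a i`. Hence the roots of the dual form can be prescribed as soon as these values
have square roots.

Take for the roots `t + s j ^ 2` with a suitable constant `t` and independent variables `s j`. The
coefficients are then products over `j` of one and the same quadratic polynomial in `s j` with
nonzero constant term, so they have square roots among the power series that are symmetric in
the `s j`. Permuting the `s j` therefore fixes the hyperplane while permuting the roots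
arbitrarily. Counting transcendence degrees shows that the hyperplane is generic, so its
coordinates generate a copy of the function field of the dual space, over which every permutation
of the roots is thus induced by an automorphism. -/

open Matrix MvPolynomial

/-- The equation of the incidence variety `Z ⊂ D × (Pⁿ)*`: a quadric `λ q₁ + μ q₂` of the
pencil meets the hyperplane `h` in a singular quadric iff `hᵀ · adj(λ M₁ + μ M₂) · h = 0`. -/
noncomputable def pencilDualForm {k : Type*} [Field k] {n : ℕ}
    (M1 M2 : Matrix (Fin (n + 1)) (Fin (n + 1)) k) :
    MvPolynomial (Fin 2 ⊕ Fin (n + 1)) k :=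
  ∑ i, ∑ j, X (Sum.inr i) * X (Sum.inr j) *
    (Matrix.adjugate (Matrix.of fun i j =>
      X (Sum.inl 0) * C (M1 i j) + X (Sum.inl 1) * C (M2 i j))) i j

section Algebra

variable {ι k F L : Type*} [Field k] [Field F] [Field L] [Algebra k L] [Algebra F L]

theorem algebraicIndependent_of_isAlgebraic_adjoin [Finite ι] {x y : ι → L}
    (hx : AlgebraicIndependent k x)
    (hxy : ∀ i, IsAlgebraic (Algebra.adjoin k (Set.range y)) (x i)) :
    AlgebraicIndependent k y := by
  let M := AlgebraicIndependent.matroid k L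
  have hxM : M.Indep (Set.range x) :=
    AlgebraicIndependent.matroid_indep_iff.mpr hx.to_subtype_range
  have hsub : Set.range x ⊆ M.closure (Set.range y) := by
    rw [AlgebraicIndependent.matroid_closure_eq]
    exact Set.range_subset_iff.mpr hxy
  have hcard_le : ENat.card ι ≤ M.eRk (Set.range y) :=
    calc ENat.card ι = (Set.range x).encard := by
          rw [← Set.image_univ, hx.injective.encard_image, Set.encard_univ]
      _ = M.eRk (Set.range x) := hxM.eRk_eq_encard.symm
      _ ≤ M.eRk (M.closure (Set.range y)) := M.eRk_mono hsub
      _ = M.eRk (Set.range y) := M.eRk_closure_eq _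
  have hle_card : (Set.range y).encard ≤ ENat.card ι := by
    rw [← Set.image_univ, ← Set.encard_univ]
    exact Set.encard_image_le _ _
  have hrk : M.eRk (Set.range y) ≤ (Set.range y).encard := M.eRk_le_encard _
  have hyM : M.Indep (Set.range y) := by
    rw [Matroid.indep_iff_eRk_eq_encard_of_finite (Set.finite_range y)]
    exact hrk.antisymm (hle_card.trans hcard_le)
  have hy : Function.Injective y := by
    refine Set.injOn_univ.mp (Set.finite_univ.injOn_of_encard_image_eq ?_)
    rw [Set.image_univ, Set.encard_univ]
    exact hle_card.antisymm (hcard_le.trans hrk)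
  exact AlgebraicIndependent.of_subtype_range hy (AlgebraicIndependent.matroid_indep_iff.mp hyM)

variable [Fintype ι] {c : L} {τ : ι → L}

theorem C_mul_prod_X_sub_C_ne_zero (hc : c ≠ 0) :
    Polynomial.C c * ∏ j, (Polynomial.X - Polynomial.C (τ j)) ≠ 0 :=
  mul_ne_zero (Polynomial.C_ne_zero.mpr hc) (Polynomial.monic_prod_X_sub_C τ _).ne_zero

theorem isAlgebraic_of_map_eq_prod {A : Type*} [CommRing A] [Algebra A L] {q : Polynomial A}
    (hc : c ≠ 0) (hq : q.map (algebraMap A L) =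
      Polynomial.C c * ∏ j, (Polynomial.X - Polynomial.C (τ j))) (j : ι) :
    IsAlgebraic A (τ j) := by
  refine ⟨q, fun h0 => C_mul_prod_X_sub_C_ne_zero (τ := τ) hc ?_, ?_⟩
  · rw [← hq, h0, Polynomial.map_zero]
  · rw [Polynomial.aeval_def, ← Polynomial.eval_map, hq, Polynomial.eval_mul,
      Polynomial.eval_prod, Finset.prod_eq_zero (Finset.mem_univ j) (by simp), mul_zero]

theorem isAlgebraic_leadingCoeff_of_map_eq_prod {A : Type*} [CommRing A] [Nontrivial A]
    [Algebra A L] {q : Polynomial A} (hq : q.map (algebraMap A L) =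
      Polynomial.C c * ∏ j, (Polynomial.X - Polynomial.C (τ j))) : IsAlgebraic A c := by
  have hlead := congrArg Polynomial.leadingCoeff hq
  rw [Polynomial.leadingCoeff_mul, Polynomial.leadingCoeff_C,
    (Polynomial.monic_prod_X_sub_C τ _).leadingCoeff, mul_one, Polynomial.leadingCoeff,
    Polynomial.coeff_map] at hlead
  exact hlead ▸ isAlgebraic_algebraMap _

theorem gal_mulEquiv_perm_of_map_eq_prod {p : Polynomial F} (hc : c ≠ 0)
    (hτ : Function.Injective τ) (hp : p.map (algebraMap F L) =
      Polynomial.C c * ∏ j, (Polynomial.X - Polynomial.C (τ j)))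
    (hπ : ∀ π : Equiv.Perm ι, ∃ φ : L ≃ₐ[F] L, ∀ j, φ (τ j) = τ (π j)) :
    Nonempty (p.Gal ≃* Equiv.Perm ι) := by
  have : Fact (p.map (algebraMap F L)).Splits := ⟨by
    rw [hp]
    exact (Polynomial.Splits.C c).mul
      (Polynomial.Splits.prod fun j _ => Polynomial.Splits.X_sub_C (τ j))⟩
  have hroot (x : L) : x ∈ p.rootSet L ↔ ∃ j, τ j = x := by
    rw [Polynomial.mem_rootSet', hp, and_iff_right (C_mul_prod_X_sub_C_ne_zero hc),
      Polynomial.aeval_def, ← Polynomial.eval_map, hp]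
    simp [hc, Polynomial.eval_prod, Finset.prod_eq_zero_iff, sub_eq_zero, eq_comm (a := x)]
  let e : ι ≃ p.rootSet L :=
    (Equiv.ofInjective τ hτ).trans (Equiv.setCongr (Set.ext fun x => (hroot x).symm))
  have hsurj : Function.Surjective (Polynomial.Gal.galActionHom p L) := fun π => by
    obtain ⟨φ, hφ⟩ := hπ (e.permCongr.symm π)
    refine ⟨Polynomial.Gal.restrict p L φ, Equiv.ext fun x => Subtype.ext ?_⟩
    obtain ⟨j, rfl⟩ := e.surjective x
    rw [Polynomial.Gal.galActionHom_restrict]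
    exact (hφ j).trans (congrArg Subtype.val (e.apply_symm_apply (π (e j))))
  exact ⟨(MulEquiv.ofBijective _ ⟨Polynomial.Gal.galActionHom_injective p L, hsurj⟩).trans
    e.permCongrHom.symm⟩

end Algebra

theorem exists_forall_mul_add_ne_zero {ι K : Type*} [Finite ι] [Field K] [Infinite K]
    {a b : ι → K} (hab : ∀ i, a i ≠ 0 ∨ b i ≠ 0) : ∃ t, ∀ i, a i * t + b i ≠ 0 := by
  classical
  cases nonempty_fintype ι
  obtain ⟨t, ht⟩ := Infinite.exists_notMem_finset (Finset.univ.image fun i => -b i / a i)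
  refine ⟨t, fun i hi => ?_⟩
  by_cases hai : a i = 0
  · rw [hai, zero_mul, zero_add] at hi
    exact (hab i).elim (· hai) (· hi)
  · refine ht (Finset.mem_image.mpr ⟨i, Finset.mem_univ i, ?_⟩)
    rw [div_eq_iff hai]
    linear_combination -hi

section Pencil

variable {K V : Type*} [Field K] [AddCommGroup V] [Module K V]

/-- The Jacobian criterion for the base locus of the pencil spanned by two symmetric bilinear
forms: `B₁ x` and `B₂ x` are, up to a factor `2`, the differentials at `x` of the two quadratic
forms, and they have to be independent at every nonzero common zero `x`. -/
def IsSmoothPencil (B₁ B₂ : LinearMap.BilinForm K V) : Prop :=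
  ∀ x, x ≠ 0 → B₁ x x = 0 → B₂ x x = 0 → LinearIndependent K ![B₁ x, B₂ x]

variable {B₁ B₂ : LinearMap.BilinForm K V}

theorem isOrthoᵢ_cons {d : ℕ} {B : LinearMap.BilinForm K V} (hB : B.IsSymm) {x : V}
    {W : Submodule K V} (hW : ∀ w ∈ W, B x w = 0) {v : Fin d → W}
    (hv : (B.restrict W).IsOrthoᵢ v) :
    B.IsOrthoᵢ (Fin.cons x (fun i => (v i : V)) : Fin (d + 1) → V) := by
  rw [LinearMap.isOrthoᵢ_def] at hv ⊢
  intro i j hij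
  cases i using Fin.cases with
  | zero =>
    cases j using Fin.cases with
    | zero => exact absurd rfl hij
    | succ j => exact hW _ (v j).2
  | succ i =>
    cases j using Fin.cases with
    | zero => exact (hB.eq _ _).symm.trans (hW _ (v i).2)
    | succ j => exact hv i j (ne_of_apply_ne Fin.succ hij)

theorem linearIndependent_of_isOrthoᵢ_pair {ι : Type*} [Finite ι] [Infinite K] {v : ι → V}
    (h₁ : B₁.IsOrthoᵢ v) (h₂ : B₂.IsOrthoᵢ v)
    (hv : ∀ i, B₁ (v i) (v i) ≠ 0 ∨ B₂ (v i) (v i) ≠ 0) : LinearIndependent K v := by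
  obtain ⟨t, ht⟩ := exists_forall_mul_add_ne_zero hv
  refine LinearMap.linearIndependent_of_isOrthoᵢ (B := t • B₁ + B₂) (fun i j hij => ?_)
    fun i hi => ht i ?_
  · have hij₁ : B₁ (v i) (v j) = 0 := h₁ hij
    have hij₂ : B₂ (v i) (v j) = 0 := h₂ hij
    change t * B₁ (v i) (v j) + B₂ (v i) (v j) = 0
    rw [hij₁, hij₂, mul_zero, add_zero]
  · rw [mul_comm]
    exact hi

theorem smul_add_smul_eq_zero_of_isOrthoᵢ {ι : Type*} (v : Module.Basis ι K V)
    (h₁ : B₁.IsOrthoᵢ v) (h₂ : B₂.IsOrthoᵢ v) {i : ι} {α β : K}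
    (h : α * B₁ (v i) (v i) + β * B₂ (v i) (v i) = 0) :
    α • B₁ (v i) + β • B₂ (v i) = 0 := by
  refine v.ext fun l => ?_
  obtain rfl | hl := eq_or_ne i l
  · exact h
  · have h₁' : B₁ (v i) (v l) = 0 := h₁ hl
    have h₂' : B₂ (v i) (v l) = 0 := h₂ hl
    simp [h₁', h₂']

theorem apply_smul_add_self_of_ortho {B : LinearMap.BilinForm K V} {x y : V} (hxy : B x y = 0)
    (hyx : B y x = 0) (s : K) : B (s • x + y) (s • x + y) = s ^ 2 * B x x + B y y := by
  simp only [map_add, map_smul, LinearMap.add_apply, LinearMap.smul_apply, smul_eq_mul, hxy, hyx]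
  ring

namespace IsSmoothPencil

theorem symm (h : IsSmoothPencil B₁ B₂) : IsSmoothPencil B₂ B₁ := fun x hx h₂ h₁ =>
  LinearIndependent.pair_symm_iff.mp (h x hx h₁ h₂)

theorem apply_ne_zero (h : IsSmoothPencil B₁ B₂) {x : V} (hx : x ≠ 0) {c : K}
    (hc : B₂ x = c • B₁ x) : B₁ x x ≠ 0 := by
  intro h₁
  have h₂ : B₂ x x = 0 := by simp [hc, h₁]
  have := LinearIndependent.pair_iff.mp (h x hx h₁ h₂) c (-1) (by simp [hc])
  simp at this

theorem exists_eigenvector [IsAlgClosed K] [FiniteDimensional K V] [Nontrivial V]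
    (h : IsSmoothPencil B₁ B₂) :
    ∃ x, (B₁ x x ≠ 0 ∧ ∃ c : K, B₂ x = c • B₁ x) ∨ (B₂ x x ≠ 0 ∧ ∃ c : K, B₁ x = c • B₂ x) := by
  by_cases hinj : Function.Injective B₁
  · let e : V ≃ₗ[K] Module.Dual K V :=
      LinearEquiv.ofInjectiveOfFinrankEq B₁ hinj Subspace.dual_finrank_eq.symm
    obtain ⟨c, hc⟩ := Module.End.exists_eigenvalue (e.symm.toLinearMap ∘ₗ B₂)
    obtain ⟨x, hx⟩ := hc.exists_hasEigenvector
    have hcx : B₂ x = c • B₁ x := by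
      have := congrArg e hx.apply_eq_smul
      rw [LinearMap.comp_apply, map_smul] at this
      exact (e.apply_symm_apply (B₂ x)).symm.trans this
    exact ⟨x, .inl ⟨h.apply_ne_zero hx.2 hcx, c, hcx⟩⟩
  · rw [injective_iff_map_eq_zero] at hinj
    push Not at hinj
    obtain ⟨x, hx, hx0⟩ := hinj
    have hcx : B₁ x = (0 : K) • B₂ x := by rw [hx, zero_smul]
    exact ⟨x, .inr ⟨h.symm.apply_ne_zero hx0 hcx, 0, hcx⟩⟩

theorem restrict_orthogonal (h : IsSmoothPencil B₁ B₂) (hs₁ : B₁.IsSymm) (hs₂ : B₂.IsSymm)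
    {x : V} {c : K} (hx : B₁ x x ≠ 0) (hc : B₂ x = c • B₁ x) :
    IsSmoothPencil (B₁.restrict (B₁.orthogonal (K ∙ x)))
      (B₂.restrict (B₁.orthogonal (K ∙ x))) := by
  intro w hw h₁ h₂
  have hli := h w (by simpa using hw) h₁ h₂
  rw [LinearIndependent.pair_iff] at hli ⊢
  intro s t hst
  refine hli s t (LinearMap.ext fun z => ?_)
  have hwx : B₁ w x = 0 := (hs₁.eq _ _).trans (w.2 x (Submodule.mem_span_singleton_self x))
  have hwx' : B₂ w x = 0 := by
    rw [← hs₂.eq, hc, LinearMap.smul_apply, ← hs₁.eq, hwx, smul_zero]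
  obtain ⟨_, hy, u, hu, rfl⟩ := Submodule.mem_sup.mp
    ((LinearMap.BilinForm.span_singleton_sup_orthogonal_eq_top hx).ge (Submodule.mem_top (x := z)))
  obtain ⟨e, rfl⟩ := Submodule.mem_span_singleton.mp hy
  have hu : s * B₁ w u + t * B₂ w u = 0 := LinearMap.congr_fun hst ⟨u, hu⟩
  simpa [hwx, hwx'] using hu

theorem exists_isOrthoᵢ [IsAlgClosed K] [FiniteDimensional K V] {d : ℕ}
    (hd : Module.finrank K V = d) (h : IsSmoothPencil B₁ B₂) (hs₁ : B₁.IsSymm)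
    (hs₂ : B₂.IsSymm) :
    ∃ v : Fin d → V, B₁.IsOrthoᵢ v ∧ B₂.IsOrthoᵢ v ∧
      ∀ i, B₁ (v i) (v i) ≠ 0 ∨ B₂ (v i) (v i) ≠ 0 := by
  induction d generalizing V with
  | zero => exact ⟨Fin.elim0, fun i => i.elim0, fun i => i.elim0, fun i => i.elim0⟩
  | succ d ih =>
    have : Nontrivial V := Module.nontrivial_of_finrank_pos (R := K) (by lia)
    obtain ⟨x, hx⟩ := h.exists_eigenvector
    wlog hx₁ : B₁ x x ≠ 0 ∧ ∃ c : K, B₂ x = c • B₁ x generalizing B₁ B₂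
    · obtain ⟨v, hv₂, hv₁, hv⟩ := this h.symm hs₂ hs₁ hx.symm (hx.resolve_left hx₁)
      exact ⟨v, hv₁, hv₂, fun i => (hv i).symm⟩
    obtain ⟨hxx, c, hc⟩ := hx₁
    let W := B₁.orthogonal (K ∙ x)
    have hW₁ : ∀ w ∈ W, B₁ x w = 0 := fun w hw => hw x (Submodule.mem_span_singleton_self x)
    have hW₂ : ∀ w ∈ W, B₂ x w = 0 := fun w hw => by simp [hc, hW₁ w hw]
    have hWd : Module.finrank K W = d := by
      have := Submodule.finrank_add_eq_of_isCompl
        (LinearMap.BilinForm.isCompl_span_singleton_orthogonal hxx)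
      rw [finrank_span_singleton fun hx0 => hxx (by simp [hx0]), hd, add_comm] at this
      exact Nat.succ_injective this
    obtain ⟨v, hv₁, hv₂, hv⟩ := ih hWd (h.restrict_orthogonal hs₁ hs₂ hxx hc)
      (hs₁.restrict W) (hs₂.restrict W)
    exact ⟨Fin.cons x fun i => (v i : V), isOrthoᵢ_cons hs₁ hW₁ hv₁, isOrthoᵢ_cons hs₂ hW₂ hv₂,
      Fin.cases (.inl hxx) hv⟩

theorem exists_basis_isOrthoᵢ [IsAlgClosed K] [FiniteDimensional K V] {d : ℕ}
    (hd : Module.finrank K V = d) (h : IsSmoothPencil B₁ B₂) (hs₁ : B₁.IsSymm)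
    (hs₂ : B₂.IsSymm) :
    ∃ v : Module.Basis (Fin d) K V, B₁.IsOrthoᵢ v ∧ B₂.IsOrthoᵢ v ∧
      ∀ i, B₁ (v i) (v i) ≠ 0 ∨ B₂ (v i) (v i) ≠ 0 := by
  obtain ⟨v, hv₁, hv₂, hv⟩ := h.exists_isOrthoᵢ hd hs₁ hs₂
  obtain ⟨b, rfl⟩ : ∃ b : Module.Basis (Fin d) K V, ⇑b = v :=
    ⟨basisOfLinearIndependentOfCardEqFinrank' v (linearIndependent_of_isOrthoᵢ_pair hv₁ hv₂ hv)
      (by rw [Fintype.card_fin, hd]), coe_basisOfLinearIndependentOfCardEqFinrank' ..⟩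
  exact ⟨b, hv₁, hv₂, hv⟩

theorem pairwise_mul_ne_mul [IsAlgClosed K] (h : IsSmoothPencil B₁ B₂) {ι : Type*}
    (v : Module.Basis ι K V) (h₁ : B₁.IsOrthoᵢ v) (h₂ : B₂.IsOrthoᵢ v)
    (hv : ∀ i, B₁ (v i) (v i) ≠ 0 ∨ B₂ (v i) (v i) ≠ 0) :
    Pairwise fun i j =>
      B₁ (v i) (v i) * B₂ (v j) (v j) ≠ B₁ (v j) (v j) * B₂ (v i) (v i) := by
  intro i j hij heq
  obtain ⟨r, hr₁, hr₂⟩ : ∃ r : K, B₁ (v j) (v j) = r * B₁ (v i) (v i) ∧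
      B₂ (v j) (v j) = r * B₂ (v i) (v i) := by
    obtain hi | hi := hv i
    · exact ⟨B₁ (v j) (v j) / B₁ (v i) (v i), by field_simp, by
        field_simp; linear_combination heq⟩
    · exact ⟨B₂ (v j) (v j) / B₂ (v i) (v i), by field_simp; linear_combination -heq, by
        field_simp⟩
  obtain ⟨s, hs⟩ := IsAlgClosed.exists_pow_nat_eq (-r) two_pos
  have hz : s • v i + v j ≠ 0 := fun hz => by
    simpa [hij] using congrArg (fun y => v.repr y j) hz
  have hli := h _ hz
    (by rw [apply_smul_add_self_of_ortho (h₁ hij) (h₁ hij.symm), hr₁, hs]; ring)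
    (by rw [apply_smul_add_self_of_ortho (h₂ hij) (h₂ hij.symm), hr₂, hs]; ring)
  have hi := smul_add_smul_eq_zero_of_isOrthoᵢ v h₁ h₂ (i := i) (α := B₂ (v i) (v i))
    (β := -B₁ (v i) (v i)) (by ring)
  have hj := smul_add_smul_eq_zero_of_isOrthoᵢ v h₁ h₂ (i := j) (α := B₂ (v i) (v i))
    (β := -B₁ (v i) (v i)) (by linear_combination -heq)
  have := LinearIndependent.pair_iff.mp hli (B₂ (v i) (v i)) (-B₁ (v i) (v i)) <| calc
    _ = s • (B₂ (v i) (v i) • B₁ (v i) + -B₁ (v i) (v i) • B₂ (v i)) +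
        (B₂ (v i) (v i) • B₁ (v j) + -B₁ (v i) (v i) • B₂ (v j)) := by
      simp only [map_add, map_smul]
      module
    _ = 0 := by rw [hi, hj, smul_zero, add_zero]
  simp only [neg_eq_zero] at this
  exact (hv i).elim (· this.2) (· this.1)

end IsSmoothPencil

end Pencil

section Matrix

variable {m K : Type*} [Fintype m] [DecidableEq m] [Field K] {M₁ M₂ : Matrix m m K}

theorem isSmoothPencil_toBilin' (h₁ : M₁.IsSymm) (h₂ : M₂.IsSymm)
    (h : ∀ x, x ≠ 0 → x ⬝ᵥ M₁ *ᵥ x = 0 → x ⬝ᵥ M₂ *ᵥ x = 0 →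
      LinearIndependent K ![M₁ *ᵥ x, M₂ *ᵥ x]) :
    IsSmoothPencil (Matrix.toBilin' M₁) (Matrix.toBilin' M₂) := by
  have happ {M : Matrix m m K} (hM : M.IsSymm) (x : m → K) :
      Matrix.toBilin' M x = dotProductEquiv K m (M *ᵥ x) := by
    refine LinearMap.ext fun y => ?_
    rw [Matrix.toBilin'_apply', dotProduct_mulVec, ← mulVec_transpose, hM.eq]
    rfl
  intro x hx hx₁ hx₂
  rw [Matrix.toBilin'_apply'] at hx₁ hx₂
  rw [happ h₁, happ h₂, LinearIndependent.pair_iff]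
  intro s t hst
  rw [← map_smul, ← map_smul, ← map_add] at hst
  exact LinearIndependent.pair_iff.mp (h x hx hx₁ hx₂) s t
    ((dotProductEquiv K m).map_eq_zero_iff.mp hst)

theorem toMatrix_transpose_mul_mul_toMatrix_eq_diagonal {M : Matrix m m K}
    (v : Module.Basis m K (m → K)) (hv : (Matrix.toBilin' M).IsOrthoᵢ v) :
    ((Pi.basisFun K m).toMatrix v)ᵀ * M * (Pi.basisFun K m).toMatrix v =
      diagonal fun i => Matrix.toBilin' M (v i) (v i) := by
  rw [← LinearMap.BilinForm.toMatrix'_toBilin' M, ← LinearMap.BilinForm.toMatrix_basisFun,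
    LinearMap.BilinForm.toMatrix_mul_basis_toMatrix, LinearMap.BilinForm.toMatrix_basisFun,
    LinearMap.BilinForm.toMatrix'_toBilin']
  ext i j
  rw [LinearMap.BilinForm.toMatrix_apply]
  obtain rfl | hij := eq_or_ne i j
  · rw [diagonal_apply_eq]
  · rw [diagonal_apply_ne _ hij]
    exact hv hij

theorem exists_simultaneous_diagonalization [IsAlgClosed K] {n : ℕ}
    {M₁ M₂ : Matrix (Fin n) (Fin n) K} (h₁ : M₁.IsSymm) (h₂ : M₂.IsSymm)
    (h : ∀ x, x ≠ 0 → x ⬝ᵥ M₁ *ᵥ x = 0 → x ⬝ᵥ M₂ *ᵥ x = 0 →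
      LinearIndependent K ![M₁ *ᵥ x, M₂ *ᵥ x]) :
    ∃ (P : Matrix (Fin n) (Fin n) K) (a b : Fin n → K), IsUnit P.det ∧
      Pᵀ * M₁ * P = diagonal a ∧ Pᵀ * M₂ * P = diagonal b ∧ (∀ i, a i ≠ 0 ∨ b i ≠ 0) ∧
      Pairwise fun i j => a i * b j ≠ a j * b i := by
  have hs := isSmoothPencil_toBilin' h₁ h₂ h
  obtain ⟨v, hv₁, hv₂, hv⟩ := hs.exists_basis_isOrthoᵢ (Module.finrank_fin_fun K)
    (Matrix.isSymm_toBilin'_iff_isSymm.mpr h₁) (Matrix.isSymm_toBilin'_iff_isSymm.mpr h₂)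
  have := (Pi.basisFun K (Fin n)).invertibleToMatrix v
  exact ⟨_, _, _, Matrix.isUnit_det_of_invertible _,
    toMatrix_transpose_mul_mul_toMatrix_eq_diagonal v hv₁,
    toMatrix_transpose_mul_mul_toMatrix_eq_diagonal v hv₂, hv, hs.pairwise_mul_ne_mul v hv₁ hv₂ hv⟩

end Matrix

section ProjectiveLine

variable {ι L : Type*} [Field L] {n : ℕ}

theorem natDegree_prod_linear_le (s : Finset ι) (a b : ι → L) :
    (∏ j ∈ s, (Polynomial.C (a j) * Polynomial.X + Polynomial.C (b j))).natDegree ≤ s.card := by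
  simpa using (Polynomial.natDegree_prod_le _ _).trans
    (Finset.sum_le_card_nsmul s _ 1 fun _ _ => Polynomial.natDegree_linear_le)

theorem eval_homogenize_prod_linear {s : Finset ι} (hs : s.card = n) (a b : ι → L)
    (x : Fin 2 → L) : MvPolynomial.eval x ((∏ j ∈ s, (Polynomial.C (a j) * Polynomial.X +
      Polynomial.C (b j))).homogenize n) = ∏ j ∈ s, (a j * x 0 + b j * x 1) := by
  rw [← hs, Finset.card_eq_sum_ones,
    Polynomial.homogenize_finsetProd fun _ _ => Polynomial.natDegree_linear_le, map_prod]
  refine Finset.prod_congr rfl fun j _ => ?_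
  simp [Polynomial.homogenize_X]

theorem eq_zero_of_eval_homogenize_eq_zero {f : Polynomial L} (hf : f.natDegree ≤ n)
    {u w : Fin (n + 1) → L} (huw : Pairwise fun i j => u i * w j ≠ u j * w i)
    (h : ∀ i, MvPolynomial.eval ![u i, w i] (f.homogenize n) = 0) : f = 0 := by
  have hdet : (projVandermonde u w).det ≠ 0 := by
    rw [det_projVandermonde]
    exact Finset.prod_ne_zero_iff.mpr fun i _ => Finset.prod_ne_zero_iff.mpr fun j hj =>
      sub_ne_zero.mpr (huw (Finset.mem_Ioi.mp hj).ne')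
  have hcoeff := eq_zero_of_mulVec_eq_zero hdet (v := fun j : Fin (n + 1) => f.coeff j) <|
    funext fun i => by
      rw [Pi.zero_apply, ← h i, mulVec, dotProduct, Polynomial.homogenize, map_sum,
        Finset.Nat.sum_antidiagonal_eq_sum_range_succ_mk,
        Finset.sum_range]
      refine Finset.sum_congr rfl fun j _ => ?_
      rw [projVandermonde_apply, MvPolynomial.eval_monomial, mul_comm]
      simp
  refine Polynomial.ext fun j => ?_
  obtain hj | hj := Nat.lt_or_ge n j
  · rw [Polynomial.coeff_eq_zero_of_natDegree_lt (hf.trans_lt hj), Polynomial.coeff_zero]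
  · exact congrFun hcoeff ⟨j, Nat.lt_succ_of_le hj⟩

/-- Lagrange interpolation on the projective line: the `i`-th linear form `a i * X + b i` vanishes
at the `i`-th node `(b i : -a i)`. -/
theorem eq_sum_eval_homogenize_div_mul_prod {f : Polynomial L} (hf : f.natDegree ≤ n)
    {a b : Fin (n + 1) → L} (hab : Pairwise fun i j => a i * b j ≠ a j * b i) :
    f = ∑ i, Polynomial.C (MvPolynomial.eval ![b i, -a i] (f.homogenize n) /
        ∏ j ∈ Finset.univ.erase i, (a j * b i - b j * a i)) *
      ∏ j ∈ Finset.univ.erase i, (Polynomial.C (a j) * Polynomial.X + Polynomial.C (b j)) := by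
  have hcard (i : Fin (n + 1)) : (Finset.univ.erase i).card = n := by simp
  rw [← sub_eq_zero]
  refine eq_zero_of_eval_homogenize_eq_zero (u := b) (w := -a) ?_ (fun i j hij h => ?_) fun i => ?_
  · refine (Polynomial.natDegree_sub_le _ _).trans (max_le hf ?_)
    refine Polynomial.natDegree_sum_le_of_forall_le _ _ fun i _ => ?_
    exact (Polynomial.natDegree_C_mul_le _ _).trans
      ((natDegree_prod_linear_le _ a b).trans_eq (hcard i))
  · refine hab hij ?_
    simp only [Pi.neg_apply] at h
    linear_combination h
  · have hnode (l : Fin (n + 1)) : MvPolynomial.eval ![b i, -a i] ((∏ j ∈ Finset.univ.erase l,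
        (Polynomial.C (a j) * Polynomial.X + Polynomial.C (b j))).homogenize n) =
        ∏ j ∈ Finset.univ.erase l, (a j * b i - b j * a i) := by
      rw [eval_homogenize_prod_linear (hcard l)]
      simp [sub_eq_add_neg]
    have hne : ∏ j ∈ Finset.univ.erase i, (a j * b i - b j * a i) ≠ 0 :=
      Finset.prod_ne_zero_iff.mpr fun j hj => sub_ne_zero.mpr fun h =>
        hab (Finset.ne_of_mem_erase hj) (h.trans (mul_comm _ _))
    simp only [Polynomial.homogenize_sub, Polynomial.homogenize_finsetSum, map_sub, map_sum,
      Polynomial.homogenize_C_mul, map_mul, MvPolynomial.eval_C, Pi.neg_apply, hnode]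
    rw [Finset.sum_eq_single_of_mem i (Finset.mem_univ i) fun l _ hl => ?_,
      div_mul_cancel₀ _ hne, sub_self]
    have hzero : ∏ j ∈ Finset.univ.erase l, (a j * b i - b j * a i) = 0 :=
      Finset.prod_eq_zero (Finset.mem_erase.mpr ⟨hl.symm, Finset.mem_univ i⟩) (by ring)
    rw [hzero, mul_zero]

theorem eval_homogenize_C_mul_prod_X_sub_C (c : L) (τ : Fin n → L) (x : Fin 2 → L) :
    MvPolynomial.eval x ((Polynomial.C c * ∏ j, (Polynomial.X - Polynomial.C (τ j))).homogenize n) =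
      c * ∏ j, (x 0 - τ j * x 1) := by
  have h := eval_homogenize_prod_linear (Finset.card_fin n) 1 (-τ) x
  rw [Polynomial.homogenize_C_mul, map_mul, MvPolynomial.eval_C]
  congr 1
  simpa [sub_eq_add_neg] using h

end ProjectiveLine

/-- The Catalan series `f` satisfies `1 - 4 X = (1 - 2 X f) ^ 2`. -/
theorem exists_sq_eq_C_add_C_mul_X {K : Type*} [Field K] [IsAlgClosed K] (h2 : (2 : K) ≠ 0) {c : K}
    (hc : c ≠ 0) (a : K) :
    ∃ w : PowerSeries K, w ^ 2 = PowerSeries.C c + PowerSeries.C a * PowerSeries.X := by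
  obtain ⟨s, hs⟩ := IsAlgClosed.exists_pow_nat_eq c two_pos
  let f : PowerSeries K := PowerSeries.catalanSeries.map (Nat.castRingHom K)
  have hf : f ^ 2 * PowerSeries.X + 1 = f := by
    simpa [f] using congrArg (PowerSeries.map (Nat.castRingHom K))
      PowerSeries.catalanSeries_sq_mul_X_add_one
  let r : K := -a / (2 * 2 * c)
  have hr : c * (-4 * r) = a := by
    simp only [r]
    field_simp
    ring
  have hg := congrArg (PowerSeries.rescale r) hf
  simp only [map_add, map_mul, map_pow, map_one, PowerSeries.rescale_X] at hg
  refine ⟨PowerSeries.C s * (1 - 2 * (PowerSeries.C r * PowerSeries.X) * PowerSeries.rescale r f),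
    ?_⟩
  rw [← hr, ← hs]
  simp only [map_mul, map_pow, map_neg, map_ofNat]
  linear_combination (4 * PowerSeries.C s ^ 2 * PowerSeries.C r * PowerSeries.X) * hg

theorem exists_sq_eq_C_add_C_mul_X_sq {K : Type*} [Field K] [IsAlgClosed K] {c : K}
    (hc : c ≠ 0) (a : K) :
    ∃ w : PowerSeries K, w ^ 2 = PowerSeries.C c + PowerSeries.C a * PowerSeries.X ^ 2 := by
  by_cases h2 : (2 : K) = 0
  · obtain ⟨s, rfl⟩ := IsAlgClosed.exists_pow_nat_eq c two_pos
    obtain ⟨r, rfl⟩ := IsAlgClosed.exists_pow_nat_eq a two_pos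
    refine ⟨PowerSeries.C s + PowerSeries.C r * PowerSeries.X, ?_⟩
    have : (2 : PowerSeries K) = 0 := by rw [← map_ofNat PowerSeries.C 2, h2, map_zero]
    simp only [map_pow]
    linear_combination PowerSeries.C s * PowerSeries.C r * PowerSeries.X * this
  · obtain ⟨w, hw⟩ := exists_sq_eq_C_add_C_mul_X h2 hc a
    refine ⟨PowerSeries.expand 2 two_ne_zero w, ?_⟩
    rw [← map_pow, hw, map_add, map_mul, PowerSeries.expand_C, PowerSeries.expand_C,
      PowerSeries.expand_X]

/-- The fraction field of the power series ring over `K` in variables indexed by `Option σ`. The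
variables `some j` are square roots of the prescribed roots of the dual form (up to a translation)
and `none` is a scaling parameter. -/
abbrev GenericRootField (K σ : Type*) [Field K] : Type _ :=
  FractionRing (MvPowerSeries (Option σ) K)

namespace GenericRootField

variable {K σ : Type*} [Field K]

/-- The variables of the power series ring, as elements of its fraction field. -/
noncomputable def coord (o : Option σ) : GenericRootField K σ :=
  algebraMap (MvPowerSeries (Option σ) K) _ (MvPowerSeries.X o)

theorem algebraicIndependent_coord :
    AlgebraicIndependent K (coord : Option σ → GenericRootField K σ) := by
  have haeval : MvPolynomial.aeval (R := K) MvPowerSeries.X =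
      (MvPolynomial.coeToMvPowerSeries.algHom K : _ →ₐ[K] MvPowerSeries (Option σ) K) :=
    MvPolynomial.algHom_ext fun o => by simp
  have hX : AlgebraicIndependent K (MvPowerSeries.X : Option σ → MvPowerSeries (Option σ) K) := by
    rw [AlgebraicIndependent, haeval]
    exact MvPolynomial.coe_injective _ _
  exact hX.map' (f := IsScalarTower.toAlgHom K _ (GenericRootField K σ))
    (IsFractionRing.injective (MvPowerSeries (Option σ) K) _)

/-- The automorphism permuting the variables `some j` and fixing `none`. -/
noncomputable def permAut (π : Equiv.Perm σ) : GenericRootField K σ ≃ₐ[K] GenericRootField K σ :=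
  IsFractionRing.algEquivOfAlgEquiv (MvPowerSeries.renameEquiv K π.optionCongr)

theorem permAut_algebraMap (π : Equiv.Perm σ) (f : MvPowerSeries (Option σ) K) :
    permAut π (algebraMap _ _ f) = algebraMap (MvPowerSeries (Option σ) K) (GenericRootField K σ)
      (MvPowerSeries.rename π.optionCongr f) :=
  IsFractionRing.algEquivOfAlgEquiv_algebraMap _ f

@[simp]
theorem permAut_coord (π : Equiv.Perm σ) (o : Option σ) :
    permAut π (coord o : GenericRootField K σ) = coord (π.optionCongr o) := by
  rw [coord, permAut_algebraMap, MvPowerSeries.rename_X, coord]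

/-- The roots to be prescribed to the dual form. They are translates of squares, rather than of the
variables themselves, so that the square roots in `exists_sq_eq_prod_add_mul_coord_sq` exist in
every characteristic. -/
noncomputable def root (t : K) (j : σ) : GenericRootField K σ :=
  algebraMap K _ t + coord (some j) ^ 2

@[simp]
theorem permAut_root (π : Equiv.Perm σ) (t : K) (j : σ) : permAut π (root t j) = root t (π j) := by
  simp [root]

theorem root_injective (t : K) : Function.Injective (root t : σ → GenericRootField K σ) := by
  intro i j hij
  have hX : (X (some i) ^ 2 : MvPolynomial (Option σ) K) = X (some j) ^ 2 := by
    apply algebraicIndependent_coord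
    simpa using add_left_cancel hij
  rw [X_pow_eq_monomial, X_pow_eq_monomial] at hX
  exact Option.some_injective _ <| Finsupp.single_left_injective two_ne_zero <|
    monomial_left_injective one_ne_zero hX

theorem exists_sq_eq_prod_add_mul_coord_sq [IsAlgClosed K] [Fintype σ] {c : K} (hc : c ≠ 0)
    (a : K) : ∃ w : GenericRootField K σ,
      w ^ 2 = ∏ j, (algebraMap K _ c + algebraMap K _ a * coord (some j) ^ 2) ∧
      ∀ π, permAut π w = w := by
  obtain ⟨s, hs⟩ := exists_sq_eq_C_add_C_mul_X_sq hc a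
  let r (j : σ) : PowerSeries K →ₐ[K] MvPowerSeries (Option σ) K :=
    MvPowerSeries.rename fun _ : Unit => some j
  have hrX (j : σ) : r j PowerSeries.X = MvPowerSeries.X (some j) := MvPowerSeries.rename_X _ _
  have hrC (j : σ) (e : K) : r j (PowerSeries.C e) = algebraMap K _ e := (r j).commutes e
  refine ⟨algebraMap _ _ (∏ j, r j s), ?_, fun π => ?_⟩
  · rw [← map_pow, ← Finset.prod_pow, map_prod]
    refine Finset.prod_congr rfl fun j _ => ?_
    rw [← map_pow, hs, map_add, map_mul, map_pow, hrC, hrC, hrX, map_add, map_mul, map_pow,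
      ← IsScalarTower.algebraMap_apply, ← IsScalarTower.algebraMap_apply]
    rfl
  · have hr (j : σ) : MvPowerSeries.rename π.optionCongr (r j s) = r (π j) s :=
      MvPowerSeries.rename_rename _ _ _
    rw [permAut_algebraMap, map_prod]
    simp_rw [hr]
    rw [Equiv.prod_comp π fun j => r j s]

end GenericRootField

section SingularMemberPoly

variable {m A B : Type*} [Fintype m] [DecidableEq m] [CommRing A] [CommRing B]

/-- The polynomial `hᵀ · adj(T M₁ + M₂) · h` in `T`: its roots are the affine parameters of the
quadrics of the pencil whose intersection with the hyperplane `h` is singular. -/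
noncomputable def singularMemberPoly (M₁ M₂ : Matrix m m A) (h : m → A) : Polynomial A :=
  (Polynomial.C ∘ h) ⬝ᵥ
    ((Polynomial.X : Polynomial A) • M₁.map Polynomial.C + M₂.map Polynomial.C).adjugate *ᵥ
      (Polynomial.C ∘ h)

theorem eval₂_pencilDualForm {k : Type*} [Field k] {n : ℕ}
    (M₁ M₂ : Matrix (Fin (n + 1)) (Fin (n + 1)) k) (g : k →+* A) (h : Fin (n + 1) → A) :
    MvPolynomial.eval₂ (Polynomial.C.comp g)
      (Sum.elim ![Polynomial.X, 1] fun j => Polynomial.C (h j)) (pencilDualForm M₁ M₂) =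
        singularMemberPoly (M₁.map g) (M₂.map g) h := by
  let e := MvPolynomial.eval₂Hom (Polynomial.C.comp g)
    (Sum.elim ![Polynomial.X, 1] fun j => Polynomial.C (h j))
  have hM : e.mapMatrix
      (Matrix.of fun i j => X (Sum.inl 0) * C (M₁ i j) + X (Sum.inl 1) * C (M₂ i j)) =
      (Polynomial.X : Polynomial A) • (M₁.map g).map Polynomial.C +
        (M₂.map g).map Polynomial.C := by
    ext1 i j
    simp [e]
  rw [pencilDualForm, singularMemberPoly, ← hM, ← e.map_adjugate, ← MvPolynomial.coe_eval₂Hom]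
  simp only [map_sum, map_mul, dotProduct, mulVec, Finset.mul_sum, RingHom.mapMatrix_apply,
    Matrix.map_apply]
  refine Finset.sum_congr rfl fun i _ => Finset.sum_congr rfl fun j _ => ?_
  rw [MvPolynomial.coe_eval₂Hom, MvPolynomial.eval₂_X, MvPolynomial.eval₂_X]
  exact (mul_assoc _ _ _).trans (congrArg _ (mul_comm _ _))

theorem map_singularMemberPoly (M₁ M₂ : Matrix m m A) (h : m → A) (f : A →+* B) :
    (singularMemberPoly M₁ M₂ h).map f = singularMemberPoly (M₁.map f) (M₂.map f) (f ∘ h) := by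
  have hM : (Polynomial.mapRingHom f).mapMatrix
      ((Polynomial.X : Polynomial A) • M₁.map Polynomial.C + M₂.map Polynomial.C) =
      (Polynomial.X : Polynomial B) • (M₁.map f).map Polynomial.C +
        (M₂.map f).map Polynomial.C := by
    ext1 i j
    simp
  have hh : Polynomial.mapRingHom f ∘ Polynomial.C ∘ h = Polynomial.C ∘ f ∘ h := by
    ext1 i
    simp
  rw [singularMemberPoly, singularMemberPoly, ← hM, ← hh, ← RingHom.map_adjugate,
    ← Polynomial.coe_mapRingHom, RingHom.map_dotProduct, RingHom.mapMatrix_apply]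
  congr 1
  exact funext (RingHom.map_mulVec _ _ _)

theorem dotProduct_adjugate_congr (P N : Matrix m m A) (h : m → A) :
    (Pᵀ *ᵥ h) ⬝ᵥ (Pᵀ * N * P).adjugate *ᵥ (Pᵀ *ᵥ h) = P.det ^ 2 * (h ⬝ᵥ N.adjugate *ᵥ h) := by
  have hadj : (Pᵀ * N * P).adjugate *ᵥ (Pᵀ *ᵥ h) = P.det • P.adjugate *ᵥ (N.adjugate *ᵥ h) := by
    rw [adjugate_mul_distrib, adjugate_mul_distrib, mulVec_mulVec, Matrix.mul_assoc,
      Matrix.mul_assoc, adjugate_mul, det_transpose]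
    simp [smul_mulVec]
  rw [hadj, dotProduct_smul, dotProduct_mulVec, vecMul_mulVec, transpose_transpose, mul_adjugate,
    vecMul_smul, vecMul_one, smul_dotProduct, smul_smul, smul_eq_mul, sq]

theorem dotProduct_adjugate_diagonal (d y : m → A) : y ⬝ᵥ (diagonal d).adjugate *ᵥ y =
    ∑ i, y i ^ 2 * ∏ j ∈ Finset.univ.erase i, d j := by
  rw [adjugate_diagonal]
  simp only [mulVec_diagonal, dotProduct]
  exact Finset.sum_congr rfl fun i _ => by ring

theorem singularMemberPoly_congr (P M₁ M₂ : Matrix m m A) (h : m → A) :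
    singularMemberPoly (Pᵀ * M₁ * P) (Pᵀ * M₂ * P) (Pᵀ *ᵥ h) =
      Polynomial.C (P.det ^ 2) * singularMemberPoly M₁ M₂ h := by
  let Q := P.map Polynomial.C
  have hM (M : Matrix m m A) : (Pᵀ * M * P).map Polynomial.C = Qᵀ * M.map Polynomial.C * Q := by
    rw [Matrix.map_mul, Matrix.map_mul, transpose_map]
  have hh : Polynomial.C ∘ (Pᵀ *ᵥ h) = Qᵀ *ᵥ (Polynomial.C ∘ h) :=
    funext (RingHom.map_mulVec _ _ _)
  have hdet : Polynomial.C P.det = Q.det := Polynomial.C.map_det P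
  rw [singularMemberPoly, hM, hM, ← Matrix.smul_mul, ← Matrix.mul_smul, ← Matrix.add_mul,
    ← Matrix.mul_add, hh, dotProduct_adjugate_congr, map_pow, hdet, singularMemberPoly]

theorem singularMemberPoly_diagonal (a b y : m → A) :
    singularMemberPoly (diagonal a) (diagonal b) y =
      ∑ i, Polynomial.C (y i ^ 2) * ∏ j ∈ Finset.univ.erase i,
        (Polynomial.C (a j) * Polynomial.X + Polynomial.C (b j)) := by
  rw [singularMemberPoly, diagonal_map (map_zero _), diagonal_map (map_zero _), ← diagonal_smul,
    diagonal_add, dotProduct_adjugate_diagonal]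
  simp [Polynomial.X_mul_C]

end SingularMemberPoly

section GenericHyperplane

variable {K : Type*} [Field K] {n : ℕ}

open GenericRootField

theorem exists_singularMemberPoly_diagonal_eq_prod [IsAlgClosed K] {a b : Fin (n + 1) → K}
    (hne : ∀ i, a i ≠ 0 ∨ b i ≠ 0) (hab : Pairwise fun i j => a i * b j ≠ a j * b i) :
    ∃ (t : K) (y : Fin (n + 1) → GenericRootField K (Fin n)),
      singularMemberPoly ((diagonal a).map (algebraMap K _)) ((diagonal b).map (algebraMap K _)) y =
        Polynomial.C (coord none ^ 2) * ∏ j, (Polynomial.X - Polynomial.C (root t j)) ∧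
      ∀ π i, permAut π (y i) = y i := by
  obtain ⟨t, ht⟩ := exists_forall_mul_add_ne_zero hne
  choose w hw hπw using fun i => exists_sq_eq_prod_add_mul_coord_sq (σ := Fin n) (ht i) (a i)
  choose δ hδ using fun i => IsAlgClosed.exists_pow_nat_eq
    (∏ j ∈ Finset.univ.erase i, (a j * b i - b j * a i)) two_pos
  set g := algebraMap K (GenericRootField K (Fin n))
  refine ⟨t, fun i => coord none * w i / g (δ i), ?_, fun π i => ?_⟩
  · have hdeg : (Polynomial.C (coord none ^ 2) *
        ∏ j : Fin n, (Polynomial.X - Polynomial.C (root t j))).natDegree ≤ n :=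
      (Polynomial.natDegree_C_mul_le _ _).trans
        (by rw [Polynomial.natDegree_finsetProd_X_sub_C_eq_card, Finset.card_fin])
    have hgab : Pairwise fun i j => g (a i) * g (b j) ≠ g (a j) * g (b i) := fun i j hij => by
      simpa only [← map_mul] using g.injective.ne (hab hij)
    rw [diagonal_map (map_zero _), diagonal_map (map_zero _), singularMemberPoly_diagonal,
      eq_sum_eval_homogenize_div_mul_prod hdeg hgab]
    refine Finset.sum_congr rfl fun i _ => ?_
    have hroot (j : Fin n) : g (b i) - root t j * -g (a i) =
        g (a i * t + b i) + g (a i) * coord (some j) ^ 2 := by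
      rw [root, map_add, map_mul]
      ring
    rw [eval_homogenize_C_mul_prod_X_sub_C]
    congr 2
    rw [div_pow, mul_pow, hw, ← map_pow, hδ, map_prod]
    simp only [cons_val_zero, cons_val_one, hroot, map_sub, map_mul]
  · rw [map_div₀, map_mul, hπw, permAut_coord, AlgEquiv.commutes]
    rfl

theorem algebraicIndependent_of_singularMemberPoly_eq_prod
    {M₁ M₂ : Matrix (Fin (n + 1)) (Fin (n + 1)) K} {h : Fin (n + 1) → GenericRootField K (Fin n)}
    {e t : K} (he : e ≠ 0)
    (hroot : singularMemberPoly (M₁.map (algebraMap K _)) (M₂.map (algebraMap K _)) h =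
      Polynomial.C (algebraMap K _ e * coord none ^ 2) *
        ∏ j, (Polynomial.X - Polynomial.C (root t j))) :
    AlgebraicIndependent K h := by
  let A := Algebra.adjoin K (Set.range h)
  let q : Polynomial A := singularMemberPoly (M₁.map (algebraMap K A)) (M₂.map (algebraMap K A))
    fun i => ⟨h i, Algebra.subset_adjoin (Set.mem_range_self i)⟩
  have hq : q.map (algebraMap A (GenericRootField K (Fin n))) =
      Polynomial.C (algebraMap K _ e * coord none ^ 2) *
        ∏ j, (Polynomial.X - Polynomial.C (root t j)) := by
    rw [← hroot, map_singularMemberPoly, Matrix.map_map, Matrix.map_map]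
    rfl
  have hconst (c : K) : IsAlgebraic A (algebraMap K (GenericRootField K (Fin n)) c) :=
    isAlgebraic_algebraMap (algebraMap K A c)
  have hscale : IsAlgebraic A (coord none : GenericRootField K (Fin n)) := by
    have he' : algebraMap K (GenericRootField K (Fin n)) e ≠ 0 := (map_ne_zero _).mpr he
    refine IsAlgebraic.of_pow two_pos ?_
    rw [← inv_mul_cancel_left₀ he' (coord none ^ 2), ← map_inv₀]
    exact (hconst _).mul (isAlgebraic_leadingCoeff_of_map_eq_prod hq)
  have hvar (j : Fin n) : IsAlgebraic A (coord (some j) : GenericRootField K (Fin n)) := by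
    have hne : algebraMap K (GenericRootField K (Fin n)) e * coord none ^ 2 ≠ 0 :=
      mul_ne_zero ((map_ne_zero _).mpr he)
        (pow_ne_zero 2 (algebraicIndependent_coord.ne_zero none))
    refine IsAlgebraic.of_pow two_pos ?_
    rw [← add_sub_cancel_left (algebraMap K _ t) (coord (some j) ^ 2)]
    exact (isAlgebraic_of_map_eq_prod hne hq j).sub (hconst t)
  refine algebraicIndependent_of_isAlgebraic_adjoin
    (algebraicIndependent_coord.comp _ (finSuccEquiv n).injective) fun i => ?_
  cases i using Fin.cases with
  | zero => simpa using hscale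
  | succ j => simpa using hvar j

theorem exists_generic_hyperplane [IsAlgClosed K] {M₁ M₂ : Matrix (Fin (n + 1)) (Fin (n + 1)) K}
    (h₁ : M₁.IsSymm) (h₂ : M₂.IsSymm)
    (hM : ∀ x, x ≠ 0 → x ⬝ᵥ M₁ *ᵥ x = 0 → x ⬝ᵥ M₂ *ᵥ x = 0 →
      LinearIndependent K ![M₁ *ᵥ x, M₂ *ᵥ x]) :
    ∃ (t : K) (c : GenericRootField K (Fin n)) (h : Fin (n + 1) → GenericRootField K (Fin n)),
      c ≠ 0 ∧ AlgebraicIndependent K h ∧ (∀ π i, permAut π (h i) = h i) ∧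
      singularMemberPoly (M₁.map (algebraMap K _)) (M₂.map (algebraMap K _)) h =
        Polynomial.C c * ∏ j, (Polynomial.X - Polynomial.C (root t j)) := by
  obtain ⟨P, a, b, hP, ha, hb, hne, hab⟩ := exists_simultaneous_diagonalization h₁ h₂ hM
  obtain ⟨t, y, hy, hπy⟩ := exists_singularMemberPoly_diagonal_eq_prod hne hab
  let g := algebraMap K (GenericRootField K (Fin n))
  have hinv : (P.map g)ᵀ *ᵥ ((Pᵀ⁻¹).map g *ᵥ y) = y := by
    rw [mulVec_mulVec, ← transpose_map, ← Matrix.map_mul,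
      mul_nonsing_inv _ (by rwa [det_transpose]), Matrix.map_one _ (map_zero g) (map_one g),
      one_mulVec]
  have hroot : singularMemberPoly (M₁.map g) (M₂.map g) ((Pᵀ⁻¹).map g *ᵥ y) =
      Polynomial.C (g (P.det ^ 2)⁻¹ * coord none ^ 2) *
        ∏ j, (Polynomial.X - Polynomial.C (root t j)) := by
    have hdet : (P.map g).det = g P.det := (g.map_det P).symm
    have hcongr := singularMemberPoly_congr (P.map g) (M₁.map g) (M₂.map g) ((Pᵀ⁻¹).map g *ᵥ y)
    rw [hinv, ← transpose_map, ← Matrix.map_mul, ← Matrix.map_mul, ← Matrix.map_mul,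
      ← Matrix.map_mul, ha, hb, hy, hdet, ← map_pow] at hcongr
    rw [map_mul, mul_assoc, hcongr, ← mul_assoc, ← map_mul, ← map_mul,
      inv_mul_cancel₀ (pow_ne_zero 2 hP.ne_zero), map_one, map_one, one_mul]
  have he : (P.det ^ 2)⁻¹ ≠ 0 := inv_ne_zero (pow_ne_zero 2 hP.ne_zero)
  refine ⟨t, _, _, ?_, algebraicIndependent_of_singularMemberPoly_eq_prod he hroot, ?_, hroot⟩
  · exact mul_ne_zero ((map_ne_zero g).mpr he)
      (pow_ne_zero 2 (algebraicIndependent_coord.ne_zero none))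
  · intro π i
    simp only [mulVec, dotProduct, Matrix.map_apply, map_sum, map_mul, hπy, g, AlgEquiv.commutes]

end GenericHyperplane

theorem stmt11_general {k K : Type*} [Field k] [Field K] [Algebra k K] [IsAlgClosed K] {n : ℕ}
    (M1 M2 : Matrix (Fin (n + 1)) (Fin (n + 1)) k) (hs1 : M1.IsSymm) (hs2 : M2.IsSymm)
    (hsmooth : ∀ x : Fin (n + 1) → K, x ≠ 0 →
      x ⬝ᵥ (M1.map (algebraMap k K)).mulVec x = 0 → x ⬝ᵥ (M2.map (algebraMap k K)).mulVec x = 0 →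
      LinearIndependent K
        ![(M1.map (algebraMap k K)).mulVec x, (M2.map (algebraMap k K)).mulVec x])
    (F : Type*) [Field F] [Algebra (MvPolynomial (Fin (n + 1)) k) F]
    [IsFractionRing (MvPolynomial (Fin (n + 1)) k) F]
    (p : Polynomial F)
    (hp : p = MvPolynomial.eval₂
      ((Polynomial.C).comp ((algebraMap (MvPolynomial (Fin (n + 1)) k) F).comp
        (MvPolynomial.C)))
      (Sum.elim ![Polynomial.X, 1]
        (fun j => Polynomial.C (algebraMap (MvPolynomial (Fin (n + 1)) k) F
          (MvPolynomial.X j))))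
      (pencilDualForm M1 M2)) :
    p.natDegree = n ∧ Nonempty (p.Gal ≃* Equiv.Perm (Fin n)) := by
  obtain ⟨t, c, h, hc, hh, hπh, hroot⟩ :=
    exists_generic_hyperplane (hs1.map _) (hs2.map _) hsmooth
  have hinj : Function.Injective (MvPolynomial.aeval (R := k) h).toRingHom :=
    hh.restrictScalars (algebraMap k K).injective
  let f : F →+* GenericRootField K (Fin n) := IsFractionRing.lift hinj
  have hf (x : MvPolynomial (Fin (n + 1)) k) : f (algebraMap _ F x) = MvPolynomial.aeval h x :=
    IsFractionRing.lift_algebraMap hinj x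
  let _ : Algebra F (GenericRootField K (Fin n)) := f.toAlgebra
  have hpmap : p.map f =
      Polynomial.C c * ∏ j, (Polynomial.X - Polynomial.C (GenericRootField.root t j)) := by
    rw [hp, eval₂_pencilDualForm, map_singularMemberPoly, ← hroot]
    congr 1 <;> ext <;> simp [hf, ← IsScalarTower.algebraMap_apply]
  refine ⟨?_, gal_mulEquiv_perm_of_map_eq_prod hc (GenericRootField.root_injective t) hpmap
    fun π => ?_⟩
  · rw [← Polynomial.natDegree_map f, hpmap, Polynomial.natDegree_C_mul hc,
      Polynomial.natDegree_finsetProd_X_sub_C_eq_card, Finset.card_fin]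
  · have hπf : (RingHomClass.toRingHom (GenericRootField.permAut π)).comp f = f := by
      refine IsLocalization.ringHom_ext (nonZeroDivisors (MvPolynomial (Fin (n + 1)) k)) ?_
      refine MvPolynomial.ringHom_ext (fun e => ?_) fun j => ?_
      · simp [hf, IsScalarTower.algebraMap_apply k K (GenericRootField K (Fin n))]
      · simp [hf, hπh]
    exact ⟨AlgEquiv.ofRingEquiv (f := (GenericRootField.permAut π).toRingEquiv)
      fun x => congrArg (· x) hπf, GenericRootField.permAut_root π t⟩

/-- Let `X ⊂ Pⁿ` (`n ≥ 4`) be a smooth complete intersection of two quadrics over an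
algebraically closed field `k` of characteristic not 2, and `Z → (Pⁿ)*` the finite flat
degree-`n` covering recording the singular members of the pencil cut on each hyperplane.
Then the monodromy group of this covering — the Galois group of the Galois closure of the
function field extension `k(Z)/k((Pⁿ)*)`, i.e. the Galois group of the degree-`n`
polynomial `p(T) = G(T, 1, h)` over the function field `F` of the dual space — is the full
symmetric group `S_n`. -/
theorem stmt11 {k : Type*} [Field k] [IsAlgClosed k] (h2 : (2 : k) ≠ 0)
    {n : ℕ} (hn : 4 ≤ n)
    (M1 M2 : Matrix (Fin (n + 1)) (Fin (n + 1)) k) (hs1 : M1.IsSymm) (hs2 : M2.IsSymm)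
    (hsmooth : ∀ x : Fin (n + 1) → k, x ≠ 0 →
      x ⬝ᵥ M1.mulVec x = 0 → x ⬝ᵥ M2.mulVec x = 0 →
      LinearIndependent k ![M1.mulVec x, M2.mulVec x])
    (F : Type*) [Field F] [Algebra (MvPolynomial (Fin (n + 1)) k) F]
    [IsFractionRing (MvPolynomial (Fin (n + 1)) k) F]
    (p : Polynomial F)
    (hp : p = MvPolynomial.eval₂
      ((Polynomial.C).comp ((algebraMap (MvPolynomial (Fin (n + 1)) k) F).comp
        (MvPolynomial.C)))
      (Sum.elim ![Polynomial.X, 1]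
        (fun j => Polynomial.C (algebraMap (MvPolynomial (Fin (n + 1)) k) F
          (MvPolynomial.X j))))
      (pencilDualForm M1 M2)) :
    p.natDegree = n ∧ Nonempty (p.Gal ≃* Equiv.Perm (Fin n)) := by
  exact stmt11_general (K := k) M1 M2 hs1 hs2 (by simpa using hsmooth) F p hp
end
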